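/- arXiv:2210.05796 — 4 statements merged into one kernel-verified Lean document; each statement's English description precedes it below -/
import Mathlib

section
/- For every eccentricity e with 0 ≤ e < 1, the integral of (1 − e·cos u)^(−7) over u from 0 to 2π equals 2π·(1 + (15/2)e² + (45/8)e⁴ + (5/16)e⁶)/(1 − e²)^(13/2). Equivalently, the average over one orbital period of (a/r)⁶ · (df/dt), where df/dt = (a/r)²·√(1 − e²), equals the averaged tidal coefficient N̄(e). -/
open Real

/-! Pass from the eccentric anomaly `u` to the true anomaly `f`. Since
`(1 - e cos u) (1 + e cos f) = 1 - e²` and `df/du = √(1 - e²) / (1 - e cos u)`, the integral of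
`(1 - e cos u) ^ (-(r + 1))` becomes that of `(1 + e cos f) ^ r` up to a power of `1 - e²`. For
`r = n ∈ ℕ` the latter is a polynomial in `e`, by the binomial theorem and the moments of the
cosine; for `n = 6` it is the numerator of `N̄(e)`. -/

section CosineMoments

theorem integral_cos_pow_odd_two_pi (k : ℕ) :
    ∫ x in (0 : ℝ)..(2 * π), cos x ^ (2 * k + 1) = 0 := by
  simpa using integral_sin_pow_mul_cos_pow_odd (a := 0) (b := 2 * π) 0 k

theorem integral_cos_pow_even_two_pi (k : ℕ) :
    ∫ x in (0 : ℝ)..(2 * π), cos x ^ (2 * k) = 2 * π * (k.centralBinom / 4 ^ k) := by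
  induction k with
  | zero => simp
  | succ k ih =>
    have centralBinom_succ :
        ((k : ℝ) + 1) * (k + 1).centralBinom = 2 * (2 * k + 1) * k.centralBinom :=
      mod_cast k.succ_mul_centralBinom_succ
    have reduction : ∫ x in (0 : ℝ)..(2 * π), cos x ^ (2 * (k + 1)) =
        (2 * k + 1) / (2 * k + 2) * ∫ x in (0 : ℝ)..(2 * π), cos x ^ (2 * k) := by
      simpa [mul_add_one] using integral_cos_pow (a := 0) (b := 2 * π) (2 * k)
    rw [reduction, ih, pow_succ]
    field_simp
    linear_combination (-2 : ℝ) * centralBinom_succ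

theorem integral_one_add_mul_cos_pow (e : ℝ) (n : ℕ) :
    ∫ x in (0 : ℝ)..(2 * π), (1 + e * cos x) ^ n =
      2 * π * ∑ k ∈ Finset.range (n / 2 + 1),
        n.choose (2 * k) * k.centralBinom * (e / 2) ^ (2 * k) := by
  have binomial (x : ℝ) : (1 + e * cos x) ^ n =
      ∑ j ∈ Finset.range (n + 1), n.choose j * e ^ j * cos x ^ j := by
    rw [add_comm, add_pow]
    exact Finset.sum_congr rfl fun j _ ↦ by ring
  have integral_binomial : ∫ x in (0 : ℝ)..(2 * π), (1 + e * cos x) ^ n =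
      ∑ j ∈ Finset.range (n + 1), n.choose j * e ^ j * ∫ x in (0 : ℝ)..(2 * π), cos x ^ j := by
    simp only [binomial]
    rw [intervalIntegral.integral_finsetSum fun j _ ↦
      Continuous.intervalIntegrable (by fun_prop) _ _]
    simp only [intervalIntegral.integral_const_mul]
  rw [integral_binomial, Finset.mul_sum]
  symm
  apply Finset.sum_of_injOn (2 * ·)
  · exact (mul_right_injective₀ two_ne_zero).injOn
  · intro k hk
    simp only [Finset.coe_range, Set.mem_Iio] at hk ⊢
    omega
  · intro j hj hj_image
    obtain ⟨k, rfl | rfl⟩ := j.even_or_odd'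
    · refine absurd ⟨k, ?_, rfl⟩ hj_image
      simp only [Finset.coe_range, Finset.mem_range, Set.mem_Iio] at hj ⊢
      omega
    · rw [integral_cos_pow_odd_two_pi, mul_zero]
  · intro k _
    rw [integral_cos_pow_even_two_pi, div_pow, pow_mul 2, show (2 : ℝ) ^ 2 = 4 by norm_num]
    ring

end CosineMoments

theorem cos_two_mul_arctan (x : ℝ) : cos (2 * arctan x) = (1 - x ^ 2) / (1 + x ^ 2) := by
  rw [cos_two_mul, cos_sq_arctan]
  field_simp
  ring

theorem sin_two_mul_arctan (x : ℝ) : sin (2 * arctan x) = 2 * x / (1 + x ^ 2) := by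
  rw [sin_two_mul, sin_arctan, cos_arctan, mul_assoc, div_mul_div_comm,
    mul_self_sqrt (by positivity)]
  ring

/-- `tan ((f - u) / 2)` for the eccentric anomaly `u` and the true anomaly `f` on an orbit of
eccentricity `e`. -/
noncomputable def tanHalfAnomalyDiff (e u : ℝ) : ℝ :=
  e * sin u / (1 + √(1 - e ^ 2) - e * cos u)

/-- The true anomaly as a function of the eccentric anomaly `u`. Unlike the textbook
`2 * arctan (√((1 + e) / (1 - e)) * tan (u / 2))`, this expression is smooth across `u = π`. -/
noncomputable def trueAnomaly (e u : ℝ) : ℝ :=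
  u + 2 * arctan (tanHalfAnomalyDiff e u)

section TrueAnomaly

variable {e : ℝ}

theorem one_add_mul_cos_pos (he : |e| < 1) (u : ℝ) : 0 < 1 + e * cos u := by
  have h : |e * cos u| < 1 := by
    rw [abs_mul]
    exact mul_lt_one_of_nonneg_of_lt_one_left (abs_nonneg e) he (abs_cos_le_one u)
  linarith [neg_lt_of_abs_lt h]

theorem one_sub_mul_cos_pos (he : |e| < 1) (u : ℝ) : 0 < 1 - e * cos u := by
  simpa [sub_eq_add_neg] using one_add_mul_cos_pos ((abs_neg e).trans_lt he) u

theorem one_add_sqrt_sub_mul_cos_pos (he : |e| < 1) (u : ℝ) :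
    0 < 1 + √(1 - e ^ 2) - e * cos u := by
  linarith [one_sub_mul_cos_pos he u, sqrt_nonneg (1 - e ^ 2)]

theorem one_sub_sq_pos (he : |e| < 1) : 0 < 1 - e ^ 2 :=
  sub_pos.2 ((sq_lt_one_iff_abs_lt_one e).2 he)

theorem one_add_tanHalfAnomalyDiff_sq (he : |e| < 1) (u : ℝ) :
    1 + tanHalfAnomalyDiff e u ^ 2 =
      2 * (1 + √(1 - e ^ 2)) * (1 - e * cos u) / (1 + √(1 - e ^ 2) - e * cos u) ^ 2 := by
  have hdenom := (one_add_sqrt_sub_mul_cos_pos he u).ne'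
  have hsqrt := sq_sqrt (one_sub_sq_pos he).le
  rw [tanHalfAnomalyDiff]
  field_simp
  linear_combination hsqrt + e ^ 2 * sin_sq_add_cos_sq u

theorem cos_trueAnomaly (he : |e| < 1) (u : ℝ) :
    cos (trueAnomaly e u) = (cos u - e) / (1 - e * cos u) := by
  have hdenom := (one_add_sqrt_sub_mul_cos_pos he u).ne'
  have hradius := (one_sub_mul_cos_pos he u).ne'
  have hsqrt := sq_sqrt (one_sub_sq_pos he).le
  rw [trueAnomaly, add_comm, cos_add, cos_two_mul_arctan, sin_two_mul_arctan,
    one_add_tanHalfAnomalyDiff_sq he, tanHalfAnomalyDiff]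
  field_simp
  linear_combination cos u * hsqrt -
    (cos u * e ^ 2 + 2 * e * (1 + √(1 - e ^ 2) - e * cos u)) * sin_sq_add_cos_sq u

theorem one_add_mul_cos_trueAnomaly (he : |e| < 1) (u : ℝ) :
    1 + e * cos (trueAnomaly e u) = (1 - e ^ 2) / (1 - e * cos u) := by
  have hradius := (one_sub_mul_cos_pos he u).ne'
  rw [cos_trueAnomaly he]
  field_simp
  ring

theorem hasDerivAt_tanHalfAnomalyDiff (he : |e| < 1) (u : ℝ) :
    HasDerivAt (tanHalfAnomalyDiff e)
      ((e * cos u * (1 + √(1 - e ^ 2) - e * cos u) - e * sin u * (e * sin u)) /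
        (1 + √(1 - e ^ 2) - e * cos u) ^ 2) u := by
  have hden : HasDerivAt (fun u ↦ 1 + √(1 - e ^ 2) - e * cos u) (e * sin u) u := by
    simpa using ((hasDerivAt_cos u).const_mul e).const_sub (1 + √(1 - e ^ 2))
  exact ((hasDerivAt_sin u).const_mul e).div hden (one_add_sqrt_sub_mul_cos_pos he u).ne'

theorem hasDerivAt_trueAnomaly (he : |e| < 1) (u : ℝ) :
    HasDerivAt (trueAnomaly e) (√(1 - e ^ 2) / (1 - e * cos u)) u := by
  have hdenom := (one_add_sqrt_sub_mul_cos_pos he u).ne'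
  have hradius := (one_sub_mul_cos_pos he u).ne'
  have hsqrt := sq_sqrt (one_sub_sq_pos he).le
  refine ((hasDerivAt_id u).add
    ((hasDerivAt_tanHalfAnomalyDiff he u).arctan.const_mul 2)).congr_deriv ?_
  rw [one_add_tanHalfAnomalyDiff_sq he]
  field_simp
  linear_combination -e ^ 2 * sin_sq_add_cos_sq u - hsqrt

theorem integral_comp_trueAnomaly {g : ℝ → ℝ} (he : |e| < 1) (hg : Continuous g) :
    ∫ u in (0 : ℝ)..(2 * π), g (trueAnomaly e u) * (√(1 - e ^ 2) / (1 - e * cos u)) =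
      ∫ f in (0 : ℝ)..(2 * π), g f := by
  have hderiv : Continuous fun u ↦ √(1 - e ^ 2) / (1 - e * cos u) :=
    Continuous.div (by fun_prop) (by fun_prop) fun u ↦ (one_sub_mul_cos_pos he u).ne'
  simpa [trueAnomaly, tanHalfAnomalyDiff] using
    intervalIntegral.integral_comp_mul_deriv (a := 0) (b := 2 * π)
      (fun u _ ↦ hasDerivAt_trueAnomaly he u) hderiv.continuousOn hg

theorem integral_one_sub_mul_cos_rpow (he : |e| < 1) (r : ℝ) :
    ∫ u in (0 : ℝ)..(2 * π), (1 - e * cos u) ^ (-(r + 1)) =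
      (∫ f in (0 : ℝ)..(2 * π), (1 + e * cos f) ^ r) / (1 - e ^ 2) ^ (r + 1 / 2) := by
  have hpos := one_sub_sq_pos he
  have hcont : Continuous fun f ↦ (1 + e * cos f) ^ r :=
    Continuous.rpow_const (by fun_prop) fun f ↦ .inl (one_add_mul_cos_pos he f).ne'
  have integrand_eq (u : ℝ) :
      (1 + e * cos (trueAnomaly e u)) ^ r * (√(1 - e ^ 2) / (1 - e * cos u)) =
        (1 - e * cos u) ^ (-(r + 1)) * (1 - e ^ 2) ^ (r + 1 / 2) := by
    have hradius := one_sub_mul_cos_pos he u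
    rw [one_add_mul_cos_trueAnomaly he, div_rpow hpos.le hradius.le, sqrt_eq_rpow,
      rpow_neg hradius.le, rpow_add_one hradius.ne', rpow_add hpos]
    field_simp
  rw [eq_div_iff (rpow_pos_of_pos hpos _).ne', ← intervalIntegral.integral_mul_const,
    ← integral_comp_trueAnomaly he hcont]
  simp only [integrand_eq]

end TrueAnomaly

theorem average_tidal_coefficient_N_general {e : ℝ} (he : |e| < 1) (n : ℕ) :
    ∫ u in (0 : ℝ)..(2 * π), (1 - e * cos u) ^ (-(n + 1) : ℤ) =
      2 * π * (∑ k ∈ Finset.range (n / 2 + 1),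
        n.choose (2 * k) * k.centralBinom * (e / 2) ^ (2 * k)) /
          (1 - e ^ 2) ^ (n + 1 / 2 : ℝ) := by
  have integrand_eq (u : ℝ) :
      (1 - e * cos u) ^ (-(n + 1) : ℤ) = (1 - e * cos u) ^ (-(n + 1) : ℝ) := by
    simp [← rpow_intCast]
  simp only [integrand_eq, integral_one_sub_mul_cos_rpow he, rpow_natCast,
    integral_one_add_mul_cos_pow]

/-- The average over one orbital period of `(a/r)^6 · (df/dt)` equals the averaged
tidal coefficient `N̄(e)`:
`∫₀^{2π} (1 - e cos u)^{-7} du = 2π (1 + (15/2)e² + (45/8)e⁴ + (5/16)e⁶)/(1 - e²)^{13/2}`. -/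
theorem average_tidal_coefficient_N (e : ℝ) (h0 : 0 ≤ e) (h1 : e < 1) :
    ∫ u in (0 : ℝ)..(2 * π), (1 - e * Real.cos u) ^ (-7 : ℤ) =
      2 * π * (1 + (15 / 2) * e ^ 2 + (45 / 8) * e ^ 4 + (5 / 16) * e ^ 6) /
        (1 - e ^ 2) ^ ((13 : ℝ) / 2) := by
  convert average_tidal_coefficient_N_general ((abs_of_nonneg h0).trans_lt h1) 6 using 3 <;>
    norm_num [Finset.sum_range_succ, Nat.choose, Nat.centralBinom]
  ring
end

section
/- Abel–Liouville formula: let n be a positive natural number, let A : ℝ → Matrix (Fin n) (Fin n) ℝ be continuous, and let V : ℝ → Matrix (Fin n) (Fin n) ℝ be differentiable with V'(t) = A(t) · V(t) for all t. Then for all t, det(V(t)) = det(V(0)) · exp(∫₀ᵗ trace(A(s)) ds). -/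
open Real Matrix

/-!
By multilinearity of the determinant in the rows and Cramer's rule, `(det V)' = tr (V' * adj V)`
(Jacobi's formula). If `V' = A * V`, then `V * adj V = det V • 1` turns this into the scalar linear
equation `(det V)' = tr A * det V`, solved by an exponential integrating factor.
-/

section Jacobi

variable {ι : Type*} [Fintype ι] [DecidableEq ι]

theorem sum_det_updateRow_eq_trace_mul_adjugate {R : Type*} [CommRing R] (M N : Matrix ι ι R) :
    ∑ i, (M.updateRow i (N i)).det = (N * M.adjugate).trace := by
  refine Finset.sum_congr rfl fun i _ ↦ ?_
  rw [← cramer_transpose_apply, cramer_eq_adjugate_mulVec, ← adjugate_transpose, mulVec_transpose]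
  rfl

theorem trace_mul_mul_adjugate {R : Type*} [CommRing R] (A M : Matrix ι ι R) :
    (A * M * M.adjugate).trace = A.trace * M.det := by
  rw [Matrix.mul_assoc, mul_adjugate, Matrix.mul_smul, Matrix.mul_one, trace_smul, smul_eq_mul,
    mul_comm]

variable {𝕜 𝔸 : Type*} [NontriviallyNormedField 𝕜] [NormedCommRing 𝔸] [NormedAlgebra 𝕜 𝔸]

theorem hasDerivAt_det {V : 𝕜 → Matrix ι ι 𝔸} {V' : Matrix ι ι 𝔸} {t : 𝕜}
    (hV : ∀ i j, HasDerivAt (fun s ↦ V s i j) (V' i j) t) :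
    HasDerivAt (fun s ↦ (V s).det) (V' * (V t).adjugate).trace t := by
  let detRows : ContinuousMultilinearMap 𝕜 (fun _ : ι ↦ ι → 𝔸) 𝔸 :=
    { (detRowAlternating (n := ι) (R := 𝔸)).toMultilinearMap.restrictScalars 𝕜 with
      cont := continuous_id.matrix_det }
  have hV_rows : HasDerivAt (fun s i ↦ V s i) (fun i ↦ V' i) t :=
    hasDerivAt_pi.2 fun i ↦ hasDerivAt_pi.2 (hV i)
  exact ((detRows.hasFDerivAt (V t)).comp_hasDerivAt t hV_rows).congr_deriv <|
    (detRows.linearDeriv_apply _ _).trans (sum_det_updateRow_eq_trace_mul_adjugate (V t) V')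

theorem hasDerivAt_det_of_hasDerivAt_mul {V : 𝕜 → Matrix ι ι 𝔸} {A : Matrix ι ι 𝔸} {t : 𝕜}
    (hV : ∀ i j, HasDerivAt (fun s ↦ V s i j) ((A * V t) i j) t) :
    HasDerivAt (fun s ↦ (V s).det) (A.trace * (V t).det) t :=
  (hasDerivAt_det hV).congr_deriv (trace_mul_mul_adjugate A (V t))

end Jacobi

section Liouville

variable {𝔸 : Type*} [NormedCommRing 𝔸] [NormedAlgebra ℝ 𝔸] [CompleteSpace 𝔸]

theorem hasDerivAt_exp_neg_integral {a : ℝ → 𝔸} (ha : Continuous a) (t₀ t : ℝ) :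
    HasDerivAt (fun u ↦ NormedSpace.exp (-∫ s in t₀..u, a s))
      (-(NormedSpace.exp (-∫ s in t₀..t, a s) * a t)) t := by
  have h_integral : HasDerivAt (fun u ↦ -∫ s in t₀..u, a s) (-a t) t :=
    (ha.integral_hasStrictDerivAt t₀ t).hasDerivAt.fun_neg
  refine ((hasFDerivAt_exp (𝕂 := ℝ)).comp_hasDerivAt t h_integral).congr_deriv ?_
  simp

theorem eq_mul_exp_integral_of_hasDerivAt_mul {a f : ℝ → 𝔸} (ha : Continuous a)
    (hf : ∀ t, HasDerivAt f (a t * f t) t) (t₀ t : ℝ) :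
    f t = f t₀ * NormedSpace.exp (∫ s in t₀..t, a s) := by
  let : NormedAlgebra ℚ 𝔸 := NormedAlgebra.restrictScalars ℚ ℝ 𝔸
  have h_deriv (u : ℝ) :
      HasDerivAt (fun u ↦ f u * NormedSpace.exp (-∫ s in t₀..u, a s)) 0 u :=
    ((hf u).fun_mul (hasDerivAt_exp_neg_integral ha t₀ u)).congr_deriv (by ring)
  have h_const : f t * NormedSpace.exp (-∫ s in t₀..t, a s) = f t₀ := by
    simpa using is_const_of_deriv_eq_zero (fun u ↦ (h_deriv u).differentiableAt)
      (fun u ↦ (h_deriv u).deriv) t t₀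
  rw [← h_const, mul_assoc, ← NormedSpace.exp_add, neg_add_cancel, NormedSpace.exp_zero, mul_one]

theorem abel_liouville_general {ι : Type*} [Fintype ι] [DecidableEq ι] {A V : ℝ → Matrix ι ι 𝔸}
    (hA : Continuous fun t ↦ (A t).trace)
    (hV : ∀ i j t, HasDerivAt (fun t ↦ V t i j) ((A t * V t) i j) t) (t₀ t : ℝ) :
    (V t).det = (V t₀).det * NormedSpace.exp (∫ s in t₀..t, (A s).trace) :=
  eq_mul_exp_integral_of_hasDerivAt_mul hA
    (fun u ↦ hasDerivAt_det_of_hasDerivAt_mul fun i j ↦ hV i j u) t₀ t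

end Liouville

/-- Abel–Liouville formula: if `V' (t) = A(t) · V(t)` with `A` continuous, then
`det V(t) = det V(0) · exp(∫₀ᵗ tr A(s) ds)`. -/
theorem abel_liouville (n : ℕ) (hn : 0 < n)
    (A : ℝ → Matrix (Fin n) (Fin n) ℝ) (hA : Continuous A)
    (V : ℝ → Matrix (Fin n) (Fin n) ℝ)
    (hV : ∀ (i j : Fin n) (t : ℝ), HasDerivAt (fun t => V t i j) ((A t * V t) i j) t) :
    ∀ t : ℝ, (V t).det = (V 0).det * Real.exp (∫ s in (0 : ℝ)..t, (A s).trace) := by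
  rw [Real.exp_eq_exp_ℝ]
  exact abel_liouville_general hA.matrix_trace hV 0
end

section
/- Automatic reducibility: let J := [[0, 1], [−1, 0]] be the standard symplectic matrix on ℝ², let λ ∈ ℝ, let ω ∈ ℝ, let f : ℝ² → ℝ² be differentiable with Df(z)ᵀ · J · Df(z) = λ·J for every z ∈ ℝ², and let K : ℝ → ℝ² be differentiable with K'(θ) ≠ 0 and f(K(θ)) = K(θ + ω) for every θ. Define N(θ) := ‖K'(θ)‖⁻² (reciprocal of the squared Euclidean norm), v(θ) := J⁻¹·K'(θ)·N(θ), and S(θ) := N(θ + ω)·⟨K'(θ + ω), Df(K(θ))·v(θ)⟩. Then for every θ: Df(K(θ))·K'(θ) = K'(θ + ω) and Df(K(θ))·v(θ) = S(θ)·K'(θ + ω) + λ·v(θ + ω); equivalently, with M(θ) the 2×2 matrix whose columns are K'(θ) and v(θ), one has Df(K(θ))·M(θ) = M(θ + ω)·[[1, S(θ)], [0, λ]]. -/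
open Matrix

/-!
In the plane `Aᵀ * J * A = det A • J` for every matrix `A`, so the area form `Ω` scales by
`det A` under `A`, and the conformal factor is the Jacobian determinant. A vector `u ≠ 0` and
`v = J⁻¹ u / ‖u‖²` are orthogonal with `Ω(u, v) = 1`; the coordinates of a vector `y` in this frame
are therefore `⟪u, y⟫ / ‖u‖²` and `Ω(u, y)`. Differentiating `f (K θ) = K (θ + ω)` shows that
`Df (K θ)` carries the tangent vector `u` at `θ` to the tangent vector `w` at `θ + ω`, so it carries
`v` to a vector with `Ω`-coordinate `Ω(Df u, Df v) = det Df` in the frame of `w`.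
-/

/-- The matrix `J = [[0, 1], [-1, 0]]` of the standard symplectic form on the plane. -/
def stdSymplecticMatrix (R : Type*) [Ring R] : Matrix (Fin 2) (Fin 2) R :=
  !![0, 1; -1, 0]

theorem transpose_mul_stdSymplecticMatrix_mul {R : Type*} [CommRing R]
    (A : Matrix (Fin 2) (Fin 2) R) :
    Aᵀ * stdSymplecticMatrix R * A = A.det • stdSymplecticMatrix R := by
  ext i j
  fin_cases i <;> fin_cases j <;>
    simp [stdSymplecticMatrix, Matrix.mul_apply, Fin.sum_univ_two, det_fin_two] <;> ring

theorem det_eq_of_conformallySymplectic {R : Type*} [CommRing R] {A : Matrix (Fin 2) (Fin 2) R}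
    {c : R} (hA : Aᵀ * stdSymplecticMatrix R * A = c • stdSymplecticMatrix R) : A.det = c := by
  rw [transpose_mul_stdSymplecticMatrix_mul] at hA
  simpa [stdSymplecticMatrix] using congrFun₂ hA 0 1

theorem inv_stdSymplecticMatrix (R : Type*) [CommRing R] :
    (stdSymplecticMatrix R)⁻¹ = !![0, -1; 1, 0] :=
  inv_eq_right_inv <| by simp [stdSymplecticMatrix, one_fin_two]

/-- The matrix with columns `u` and `v`. -/
def columnMatrix {m R : Type*} (u v : m → R) : Matrix m (Fin 2) R :=
  Matrix.of fun i j => ![u i, v i] j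

theorem mul_columnMatrix_eq_columnMatrix_mul_iff {m n R : Type*} [Fintype n] [CommSemiring R]
    {A : Matrix m n R} {u v : n → R} {w z : m → R} {a b c d : R} :
    A * columnMatrix u v = columnMatrix w z * !![a, b; c, d] ↔
      A *ᵥ u = a • w + c • z ∧ A *ᵥ v = b • w + d • z := by
  simp [← Matrix.ext_iff, funext_iff, Fin.forall_fin_two, forall_and, columnMatrix,
    Matrix.mul_apply, mulVec, dotProduct, Fin.sum_univ_two, mul_comm]

theorem hasFDerivAt_apply_tangent_eq {𝕜 E : Type*} [NontriviallyNormedField 𝕜]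
    [NormedAddCommGroup E] [NormedSpace 𝕜 E] {f : E → E} {A : E →L[𝕜] E} {K : 𝕜 → E} {u w : E}
    {θ ω : 𝕜} (hf : HasFDerivAt f A (K θ)) (hu : HasDerivAt K u θ) (hw : HasDerivAt K w (θ + ω))
    (hinv : ∀ t, f (K t) = K (t + ω)) : A u = w := by
  have hfK : HasDerivAt (fun t => K (t + ω)) (A u) θ :=
    (hf.comp_hasDerivAt θ hu).congr_of_eventuallyEq (.of_forall fun t => (hinv t).symm)
  exact hfK.unique (hw.comp_add_const θ ω)

section Plane

local notation "ℝ²" => EuclideanSpace ℝ (Fin 2)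

/-- The standard symplectic form `Ω(x, y) = xᵀ J y` on the Euclidean plane. -/
def symplecticForm (x y : ℝ²) : ℝ :=
  x ⬝ᵥ stdSymplecticMatrix ℝ *ᵥ y

theorem symplecticForm_eq (x y : ℝ²) : symplecticForm x y = x 0 * y 1 - x 1 * y 0 := by
  simp [symplecticForm, stdSymplecticMatrix, sub_eq_add_neg, dotProduct, Fin.sum_univ_two]

theorem symplecticForm_map (A : Matrix (Fin 2) (Fin 2) ℝ) (x y : ℝ²) :
    symplecticForm (toEuclideanCLM (𝕜 := ℝ) A x) (toEuclideanCLM (𝕜 := ℝ) A y) =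
      A.det * symplecticForm x y := by
  calc (A *ᵥ x) ⬝ᵥ stdSymplecticMatrix ℝ *ᵥ (A *ᵥ y)
      = x ⬝ᵥ (Aᵀ * stdSymplecticMatrix ℝ * A) *ᵥ y := by
        simp only [← mulVec_mulVec, dotProduct_mulVec, vecMul_transpose]
    _ = A.det * symplecticForm x y := by
        rw [transpose_mul_stdSymplecticMatrix_mul, smul_mulVec, dotProduct_smul, smul_eq_mul,
          symplecticForm]

/-- The vector `v = J⁻¹ u / ‖u‖²` orthogonal to `u` and symplectically conjugate to it
(`Ω(u, v) = 1`). It is `0` when `u = 0`. -/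
noncomputable def conjugateVector (u : ℝ²) : ℝ² :=
  (‖u‖ ^ 2)⁻¹ • toEuclideanCLM (𝕜 := ℝ) (stdSymplecticMatrix ℝ)⁻¹ u

theorem conjugateVector_apply_zero (u : ℝ²) : conjugateVector u 0 = -((‖u‖ ^ 2)⁻¹ * u 1) := by
  simp [conjugateVector, inv_stdSymplecticMatrix, mulVec, dotProduct]

theorem conjugateVector_apply_one (u : ℝ²) : conjugateVector u 1 = (‖u‖ ^ 2)⁻¹ * u 0 := by
  simp [conjugateVector, inv_stdSymplecticMatrix, mulVec, dotProduct]

theorem inv_norm_sq_mul_sum_sq {u : ℝ²} (hu : u ≠ 0) :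
    (‖u‖ ^ 2)⁻¹ * (u 0 ^ 2 + u 1 ^ 2) = 1 := by
  rw [← Fin.sum_univ_two (fun i => u i ^ 2), ← EuclideanSpace.real_norm_sq_eq]
  exact inv_mul_cancel₀ (pow_ne_zero 2 (norm_ne_zero_iff.2 hu))

theorem symplecticForm_conjugateVector {u : ℝ²} (hu : u ≠ 0) :
    symplecticForm u (conjugateVector u) = 1 := by
  rw [symplecticForm_eq, conjugateVector_apply_zero, conjugateVector_apply_one]
  linear_combination inv_norm_sq_mul_sum_sq hu

theorem eq_smul_add_symplecticForm_smul_conjugateVector {w : ℝ²} (hw : w ≠ 0) (y : ℝ²) :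
    y = ((‖w‖ ^ 2)⁻¹ * inner ℝ w y) • w + symplecticForm w y • conjugateVector w := by
  have hinner : inner ℝ w y = w 0 * y 0 + w 1 * y 1 := by
    simp [PiLp.inner_apply, Fin.sum_univ_two, mul_comm]
  have hnorm := inv_norm_sq_mul_sum_sq hw
  ext i
  rw [PiLp.add_apply, PiLp.smul_apply, PiLp.smul_apply, smul_eq_mul, smul_eq_mul, hinner,
    symplecticForm_eq]
  fin_cases i
  · change y 0 = _ * w 0 + _ * conjugateVector w 0
    rw [conjugateVector_apply_zero]
    linear_combination -y 0 * hnorm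
  · change y 1 = _ * w 1 + _ * conjugateVector w 1
    rw [conjugateVector_apply_one]
    linear_combination -y 1 * hnorm

/-- The shear coefficient `S` of `A` between the frames `(u, v_u)` and `(w, v_w)`, where `v` is the
conjugate vector: the coordinate of `A v_u` along `w`. In `automatic_reducibility`, `A = Df (K θ)`,
`u = K' θ` and `w = K' (θ + ω)`. -/
noncomputable def shear (A : Matrix (Fin 2) (Fin 2) ℝ) (u w : ℝ²) : ℝ :=
  (‖w‖ ^ 2)⁻¹ * inner ℝ w (toEuclideanCLM (𝕜 := ℝ) A (conjugateVector u))

theorem toEuclideanCLM_conjugateVector {A : Matrix (Fin 2) (Fin 2) ℝ} {u w : ℝ²}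
    (hAu : toEuclideanCLM (𝕜 := ℝ) A u = w) (hw : w ≠ 0) :
    toEuclideanCLM (𝕜 := ℝ) A (conjugateVector u) =
      shear A u w • w + A.det • conjugateVector w := by
  have hu : u ≠ 0 := by
    rintro rfl
    exact hw (by rw [← hAu, map_zero])
  have hform : symplecticForm w (toEuclideanCLM (𝕜 := ℝ) A (conjugateVector u)) = A.det := by
    rw [← hAu, symplecticForm_map, symplecticForm_conjugateVector hu, mul_one]
  rw [shear, ← hform]
  exact eq_smul_add_symplecticForm_smul_conjugateVector hw _

theorem automatic_reducibility_general {ω : ℝ} {f : ℝ² → ℝ²}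
    {Df : ℝ² → Matrix (Fin 2) (Fin 2) ℝ} {K K' : ℝ → ℝ²}
    (hDf : ∀ θ, HasFDerivAt f (toEuclideanCLM (𝕜 := ℝ) (Df (K θ))) (K θ))
    (hK : ∀ θ, HasDerivAt K (K' θ) θ) (hK0 : ∀ θ, K' θ ≠ 0)
    (hinv : ∀ θ, f (K θ) = K (θ + ω)) (θ : ℝ) :
    toEuclideanCLM (𝕜 := ℝ) (Df (K θ)) (K' θ) = K' (θ + ω) ∧
    toEuclideanCLM (𝕜 := ℝ) (Df (K θ)) (conjugateVector (K' θ)) =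
      shear (Df (K θ)) (K' θ) (K' (θ + ω)) • K' (θ + ω) +
        (Df (K θ)).det • conjugateVector (K' (θ + ω)) ∧
    Df (K θ) * columnMatrix (K' θ) (conjugateVector (K' θ)) =
      columnMatrix (K' (θ + ω)) (conjugateVector (K' (θ + ω))) *
        !![1, shear (Df (K θ)) (K' θ) (K' (θ + ω)); 0, (Df (K θ)).det] := by
  have htangent := hasFDerivAt_apply_tangent_eq (hDf θ) (hK θ) (hK (θ + ω)) hinv
  have hconj := toEuclideanCLM_conjugateVector htangent (hK0 (θ + ω))
  refine ⟨htangent, hconj, mul_columnMatrix_eq_columnMatrix_mul_iff.2 ⟨?_, ?_⟩⟩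
  · simpa using congrArg WithLp.ofLp htangent
  · simpa using congrArg WithLp.ofLp hconj

end Plane

/-- Automatic reducibility for conformally symplectic maps of the plane: if `f` is
conformally symplectic with constant conformal factor `λ` (`Df(z)ᵀ J Df(z) = λ J`
with `J = [[0,1],[-1,0]]`) and `K` parametrizes an invariant torus of frequency `ω`
(`f(K(θ)) = K(θ+ω)`, `K'(θ) ≠ 0`), then setting `N(θ) = ‖K'(θ)‖⁻²`,
`v(θ) = J⁻¹ K'(θ) N(θ)` and `S(θ) = N(θ+ω) ⟨K'(θ+ω), Df(K(θ)) v(θ)⟩`, one has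
`Df(K(θ)) K'(θ) = K'(θ+ω)` and `Df(K(θ)) v(θ) = S(θ) K'(θ+ω) + λ v(θ+ω)`;
equivalently `Df(K(θ)) M(θ) = M(θ+ω) [[1, S(θ)], [0, λ]]` where `M(θ)` has
columns `K'(θ)` and `v(θ)`. -/
theorem automatic_reducibility (lam ω : ℝ)
    (f : EuclideanSpace ℝ (Fin 2) → EuclideanSpace ℝ (Fin 2))
    (Df : EuclideanSpace ℝ (Fin 2) → Matrix (Fin 2) (Fin 2) ℝ)
    (hDf : ∀ z, HasFDerivAt f (Matrix.toEuclideanCLM (𝕜 := ℝ) (Df z)) z)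
    (hconf : ∀ z, (Df z)ᵀ * !![0, 1; -1, 0] * Df z = lam • !![0, 1; -1, 0])
    (K K' : ℝ → EuclideanSpace ℝ (Fin 2))
    (hK : ∀ θ, HasDerivAt K (K' θ) θ)
    (hK0 : ∀ θ, K' θ ≠ 0)
    (hinv : ∀ θ, f (K θ) = K (θ + ω))
    (N : ℝ → ℝ) (hN : ∀ θ, N θ = (‖K' θ‖ ^ 2)⁻¹)
    (v : ℝ → EuclideanSpace ℝ (Fin 2))
    (hv : ∀ θ, v θ = N θ • Matrix.toEuclideanCLM (𝕜 := ℝ) (!![0, 1; -1, 0])⁻¹ (K' θ))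
    (S : ℝ → ℝ)
    (hS : ∀ θ, S θ = N (θ + ω) *
      inner ℝ (K' (θ + ω)) (Matrix.toEuclideanCLM (𝕜 := ℝ) (Df (K θ)) (v θ))) :
    ∀ θ : ℝ,
      Matrix.toEuclideanCLM (𝕜 := ℝ) (Df (K θ)) (K' θ) = K' (θ + ω) ∧
      Matrix.toEuclideanCLM (𝕜 := ℝ) (Df (K θ)) (v θ) =
        S θ • K' (θ + ω) + lam • v (θ + ω) ∧
      Df (K θ) * Matrix.of (fun i j => ![K' θ i, v θ i] j) =
        Matrix.of (fun i j => ![K' (θ + ω) i, v (θ + ω) i] j) * !![1, S θ; 0, lam] := by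
  intro θ
  simp only [hS, hv, hN, ← det_eq_of_conformallySymplectic (hconf (K θ))]
  exact automatic_reducibility_general (fun θ => hDf (K θ)) hK hK0 hinv θ
end

section
/- Invariant bundles: under the hypotheses of automatic reducibility — J := [[0, 1], [−1, 0]], λ, ω ∈ ℝ, f : ℝ² → ℝ² differentiable with Df(z)ᵀ·J·Df(z) = λ·J for all z, K : ℝ → ℝ² differentiable with K'(θ) ≠ 0 and f(K(θ)) = K(θ + ω) for all θ, N(θ) := ‖K'(θ)‖⁻², v(θ) := J⁻¹·K'(θ)·N(θ), S(θ) := N(θ + ω)·⟨K'(θ + ω), Df(K(θ))·v(θ)⟩ — suppose in addition that B : ℝ → ℝ satisfies B(θ) − λ·B(θ + ω) = −S(θ) for all θ. Define E^c(θ) := K'(θ) and E^s(θ) := B(θ)·K'(θ) + v(θ). Then for every θ: Df(K(θ))·E^c(θ) = E^c(θ + ω) and Df(K(θ))·E^s(θ) = λ·E^s(θ + ω); i.e. E^c and E^s span the tangent and stable invariant line bundles over the torus, with multipliers 1 and λ respectively. -/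
open Matrix

/-!
Write `e = K' θ`, `e' = K' (θ + ω)` and `A = Df (K θ)`. Differentiating the invariance equation
gives `A e = e'`. The vector `v e = J⁻¹ e / ‖e‖²` completes `e` to a frame of area one, and in
the frame `(e', v e')` the coordinates of `w` are `⟪e', w⟫ / ‖e'‖²` and `Ω e' w`. For `w = A (v e)`
the first is `S θ` by definition and the second is `λ Ω e (v e) = λ`, so
`A (v e) = S θ • e' + λ • v e'`. The cohomological equation says precisely that adding `B θ • e`
to `v e` removes the off-diagonal entry `S θ` of this triangular cocycle.
-/

open Module
open scoped EuclideanSpace RealInnerProductSpace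

section OrientedPlane

variable {E : Type*} [NormedAddCommGroup E] [InnerProductSpace ℝ E] [Fact (finrank ℝ E = 2)]
  (o : Orientation ℝ E (Fin 2)) {A : E →L[ℝ] E} {c : ℝ} {e : E}

/-- The linear map `A` of an oriented Euclidean plane is conformally symplectic with factor `c`:
it multiplies the area form by `c`. The factor may vanish, so `A` need not be invertible. -/
def IsConformallySymplectic (A : E →L[ℝ] E) (c : ℝ) : Prop :=
  ∀ x y, o.areaForm (A x) (A y) = c * o.areaForm x y

/-- The symplectic normal `J⁻¹ e / ‖e‖²` to a vector `e`, which spans an area of one with `e`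
(and is zero for `e = 0`). With `Ω(x, y) = ⟪x, J y⟫` as area form, `J⁻¹` is the rotation
by a right angle. -/
noncomputable def symplecticNormal (e : E) : E :=
  (‖e‖ ^ 2)⁻¹ • o.rightAngleRotation e

/-- The torsion of a linear map `A` from the tangent vector `e` to the tangent vector `e'`: the
coordinate along `e'` of the image of the symplectic normal to `e`. -/
noncomputable def torsion (A : E →L[ℝ] E) (e e' : E) : ℝ :=
  (‖e'‖ ^ 2)⁻¹ * ⟪e', A (symplecticNormal o e)⟫

theorem areaForm_symplecticNormal (he : e ≠ 0) : o.areaForm e (symplecticNormal o e) = 1 := by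
  rw [symplecticNormal, map_smul, o.areaForm_rightAngleRotation_right, real_inner_self_eq_norm_sq,
    smul_eq_mul, inv_mul_cancel₀ (pow_ne_zero 2 (norm_ne_zero_iff.mpr he))]

theorem inner_smul_add_areaForm_smul_symplecticNormal (he : e ≠ 0) (w : E) :
    ((‖e‖ ^ 2)⁻¹ * ⟪e, w⟫) • e + o.areaForm e w • symplecticNormal o e = w := by
  refine ext_inner_right ℝ fun y ↦ ?_
  have hnorm : ‖e‖ ^ 2 ≠ 0 := pow_ne_zero 2 (norm_ne_zero_iff.mpr he)
  calc
    ⟪((‖e‖ ^ 2)⁻¹ * ⟪e, w⟫) • e + o.areaForm e w • symplecticNormal o e, y⟫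
      = (‖e‖ ^ 2)⁻¹ * (⟪e, w⟫ * ⟪e, y⟫ + o.areaForm e w * o.areaForm e y) := by
        simp only [symplecticNormal, inner_add_left, real_inner_smul_left,
          o.inner_rightAngleRotation_left]
        ring
    _ = ⟪w, y⟫ := by
        rw [o.inner_mul_inner_add_areaForm_mul_areaForm, inv_mul_cancel_left₀ hnorm]

namespace IsConformallySymplectic

variable {o}

theorem areaForm_map_symplecticNormal (hA : IsConformallySymplectic o A c) (he : e ≠ 0) :
    o.areaForm (A e) (A (symplecticNormal o e)) = c := by
  rw [hA, areaForm_symplecticNormal o he, mul_one]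

theorem map_symplecticNormal (hA : IsConformallySymplectic o A c) (he : e ≠ 0) (hAe : A e ≠ 0) :
    A (symplecticNormal o e) = torsion o A e (A e) • A e + c • symplecticNormal o (A e) := by
  have h := inner_smul_add_areaForm_smul_symplecticNormal o hAe (A (symplecticNormal o e))
  rw [hA.areaForm_map_symplecticNormal he] at h
  exact h.symm

theorem map_smul_add_symplecticNormal (hA : IsConformallySymplectic o A c) (he : e ≠ 0)
    (hAe : A e ≠ 0) {b b' : ℝ} (hb : b - c * b' = -torsion o A e (A e)) :
    A (b • e + symplecticNormal o e) = c • (b' • A e + symplecticNormal o (A e)) := by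
  have hb' : b + torsion o A e (A e) = c * b' := by linear_combination hb
  calc
    A (b • e + symplecticNormal o e)
      = (b + torsion o A e (A e)) • A e + c • symplecticNormal o (A e) := by
        rw [map_add, map_smul, hA.map_symplecticNormal he hAe, add_smul, add_assoc]
    _ = c • (b' • A e + symplecticNormal o (A e)) := by rw [hb', smul_add, smul_smul]

end IsConformallySymplectic

end OrientedPlane

theorem hasFDerivAt_apply_eq_of_comp_eq_shift {𝕜 F : Type*} [NontriviallyNormedField 𝕜]
    [NormedAddCommGroup F] [NormedSpace 𝕜 F] {f : F → F} {A : F →L[𝕜] F} {K : 𝕜 → F} {e e' : F}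
    {θ ω : 𝕜} (hf : HasFDerivAt f A (K θ)) (hK : HasDerivAt K e θ) (hK' : HasDerivAt K e' (θ + ω))
    (hinv : ∀ t, f (K t) = K (t + ω)) : A e = e' := by
  have hshift : HasDerivAt (f ∘ K) e' θ := by
    rw [show f ∘ K = fun t ↦ K (t + ω) from funext hinv]
    exact hK'.comp_add_const θ ω
  exact (hf.comp_hasDerivAt θ hK).unique hshift

theorem invariant_bundles_general {E : Type*} [NormedAddCommGroup E] [InnerProductSpace ℝ E]
    [Fact (finrank ℝ E = 2)] (o : Orientation ℝ E (Fin 2)) (lam : ℝ → ℝ) (ω : ℝ) (f : E → E)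
    (K K' : ℝ → E) (A : ℝ → E →L[ℝ] E) (hf : ∀ θ, HasFDerivAt f (A θ) (K θ))
    (hconf : ∀ θ, IsConformallySymplectic o (A θ) (lam θ))
    (hK : ∀ θ, HasDerivAt K (K' θ) θ) (hK0 : ∀ θ, K' θ ≠ 0)
    (hinv : ∀ θ, f (K θ) = K (θ + ω)) (B : ℝ → ℝ)
    (hB : ∀ θ, B θ - lam θ * B (θ + ω) = -torsion o (A θ) (K' θ) (K' (θ + ω))) (θ : ℝ) :
    A θ (K' θ) = K' (θ + ω) ∧
      A θ (B θ • K' θ + symplecticNormal o (K' θ)) =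
        lam θ • (B (θ + ω) • K' (θ + ω) + symplecticNormal o (K' (θ + ω))) := by
  have htangent : A θ (K' θ) = K' (θ + ω) :=
    hasFDerivAt_apply_eq_of_comp_eq_shift (hf θ) (hK θ) (hK (θ + ω)) hinv
  have hB' := hB θ
  have hK0' := hK0 (θ + ω)
  rw [← htangent] at hB' hK0' ⊢
  exact ⟨rfl, (hconf θ).map_smul_add_symplecticNormal (hK0 θ) hK0' hB'⟩

section StandardPlane

/-- The standard orientation of `ℝ²`, whose area form is the symplectic form `Ω`. -/
noncomputable def planeOrientation : Orientation ℝ (EuclideanSpace ℝ (Fin 2)) (Fin 2) :=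
  (EuclideanSpace.basisFun (Fin 2) ℝ).toBasis.orientation

theorem areaForm_planeOrientation (x y : EuclideanSpace ℝ (Fin 2)) :
    planeOrientation.areaForm x y = ⟪x, toEuclideanCLM (𝕜 := ℝ) !![0, 1; -1, 0] y⟫ := by
  rw [Orientation.areaForm_to_volumeForm,
    planeOrientation.volumeForm_robust (EuclideanSpace.basisFun (Fin 2) ℝ) rfl, Basis.det_apply,
    det_fin_two, inner_toEuclideanCLM]
  simp only [Basis.toMatrix_apply, cons_val_zero, OrthonormalBasis.coe_toBasis_repr_apply,
    EuclideanSpace.basisFun_repr, cons_val_one, cons_val_fin_one, dotProduct, mulVec, of_apply,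
    cons_val', Fin.sum_univ_two]
  ring

theorem rightAngleRotation_planeOrientation (x : EuclideanSpace ℝ (Fin 2)) :
    planeOrientation.rightAngleRotation x =
      toEuclideanCLM (𝕜 := ℝ) (!![0, 1; -1, 0])⁻¹ x := by
  set J : Matrix (Fin 2) (Fin 2) ℝ := !![0, 1; -1, 0] with hJ
  have hrot : toEuclideanCLM (𝕜 := ℝ) J (planeOrientation.rightAngleRotation x) = x :=
    ext_inner_left ℝ fun y ↦ by
      rw [← areaForm_planeOrientation, Orientation.areaForm_rightAngleRotation_right]
  have hdet : IsUnit J.det := by simp [hJ, det_fin_two]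
  calc
    planeOrientation.rightAngleRotation x
      = toEuclideanCLM (𝕜 := ℝ) (J⁻¹ * J) (planeOrientation.rightAngleRotation x) := by
        rw [nonsing_inv_mul J hdet, map_one, one_apply_eq_self]
    _ = toEuclideanCLM (𝕜 := ℝ) J⁻¹ x := by
        rw [map_mul, mul_apply_eq_comp, hrot]

theorem symplecticNormal_planeOrientation (e : EuclideanSpace ℝ (Fin 2)) :
    symplecticNormal planeOrientation e =
      (‖e‖ ^ 2)⁻¹ • toEuclideanCLM (𝕜 := ℝ) (!![0, 1; -1, 0])⁻¹ e := by
  rw [symplecticNormal, rightAngleRotation_planeOrientation]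

theorem isConformallySymplectic_toEuclideanCLM {M : Matrix (Fin 2) (Fin 2) ℝ} {c : ℝ}
    (hM : Mᵀ * !![0, 1; -1, 0] * M = c • !![0, 1; -1, 0]) :
    IsConformallySymplectic planeOrientation (toEuclideanCLM (𝕜 := ℝ) M) c := fun x y ↦ by
  set J : Matrix (Fin 2) (Fin 2) ℝ := !![0, 1; -1, 0]
  calc
    planeOrientation.areaForm (toEuclideanCLM (𝕜 := ℝ) M x) (toEuclideanCLM (𝕜 := ℝ) M y)
      = ⟪x, toEuclideanCLM (𝕜 := ℝ) (Mᵀ * J * M) y⟫ := by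
        rw [areaForm_planeOrientation, inner_toEuclideanCLM, inner_toEuclideanCLM,
          ofLp_toEuclideanCLM, ofLp_toEuclideanCLM, ← mulVec_mulVec, ← mulVec_mulVec,
          dotProduct_mulVec x.ofLp, vecMul_transpose]
    _ = c * planeOrientation.areaForm x y := by
        rw [hM, map_smul, _root_.smul_apply, real_inner_smul_right,
          areaForm_planeOrientation]

end StandardPlane

/-- Invariant bundles over a torus of a conformally symplectic map of the plane:
with the automatic-reducibility data and a solution `B` of the cohomological
equation `B(θ) - λ B(θ+ω) = -S(θ)`, the vectors `E^c(θ) = K'(θ)` and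
`E^s(θ) = B(θ) K'(θ) + v(θ)` satisfy `Df(K(θ)) E^c(θ) = E^c(θ+ω)` and
`Df(K(θ)) E^s(θ) = λ E^s(θ+ω)`, i.e. they span the tangent and stable invariant
line bundles, with multipliers `1` and `λ`. -/
theorem invariant_bundles (lam ω : ℝ)
    (f : EuclideanSpace ℝ (Fin 2) → EuclideanSpace ℝ (Fin 2))
    (Df : EuclideanSpace ℝ (Fin 2) → Matrix (Fin 2) (Fin 2) ℝ)
    (hDf : ∀ z, HasFDerivAt f (Matrix.toEuclideanCLM (𝕜 := ℝ) (Df z)) z)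
    (hconf : ∀ z, (Df z)ᵀ * !![0, 1; -1, 0] * Df z = lam • !![0, 1; -1, 0])
    (K K' : ℝ → EuclideanSpace ℝ (Fin 2))
    (hK : ∀ θ, HasDerivAt K (K' θ) θ)
    (hK0 : ∀ θ, K' θ ≠ 0)
    (hinv : ∀ θ, f (K θ) = K (θ + ω))
    (N : ℝ → ℝ) (hN : ∀ θ, N θ = (‖K' θ‖ ^ 2)⁻¹)
    (v : ℝ → EuclideanSpace ℝ (Fin 2))
    (hv : ∀ θ, v θ = N θ • Matrix.toEuclideanCLM (𝕜 := ℝ) (!![0, 1; -1, 0])⁻¹ (K' θ))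
    (S : ℝ → ℝ)
    (hS : ∀ θ, S θ = N (θ + ω) *
      inner ℝ (K' (θ + ω)) (Matrix.toEuclideanCLM (𝕜 := ℝ) (Df (K θ)) (v θ)))
    (B : ℝ → ℝ)
    (hB : ∀ θ, B θ - lam * B (θ + ω) = -S θ) :
    ∀ θ : ℝ,
      Matrix.toEuclideanCLM (𝕜 := ℝ) (Df (K θ)) (K' θ) = K' (θ + ω) ∧
      Matrix.toEuclideanCLM (𝕜 := ℝ) (Df (K θ)) (B θ • K' θ + v θ) =
        lam • (B (θ + ω) • K' (θ + ω) + v (θ + ω)) := by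
  have hv' (θ : ℝ) : v θ = symplecticNormal planeOrientation (K' θ) := by
    rw [hv, hN, symplecticNormal_planeOrientation]
  have hS' (θ : ℝ) : S θ = torsion planeOrientation (toEuclideanCLM (𝕜 := ℝ) (Df (K θ))) (K' θ)
      (K' (θ + ω)) := by
    rw [hS, hN, hv', torsion]
  simpa only [hv'] using invariant_bundles_general planeOrientation (fun _ ↦ lam) ω f K K' _
    (fun θ ↦ hDf (K θ)) (fun θ ↦ isConformallySymplectic_toEuclideanCLM (hconf (K θ))) hK hK0 hinv B
    fun θ ↦ by rw [hB, hS']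
end
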